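/- Let λ0 ∈ ℝ and let g be an exchangeable prior. Let d be a design with τ0′ C_{d22} τ0 > 0 for g-almost every τ0 and m_d g-integrable. Then d is E_{g,λ0}-optimal if and only if E_{g,λ0}(d) = n y*/(t−1). -/

import Mathlib

open Matrix MeasureTheory
open scoped Classical

noncomputable section

/-- A treatment sequence: assigns a treatment in `Fin t` to each period in `Fin p`. -/
abbrev TrtSeq (p t : ℕ) := Fin p → Fin t

/-- Treatment/period incidence matrix `T_s`. -/
def Tmat {p t : ℕ} (s : TrtSeq p t) : Matrix (Fin p) (Fin t) ℝ :=
  Matrix.of fun k i => if s k = i then 1 else 0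

/-- Carryover incidence matrix `F_s`: first row zero, row `k` records the treatment
in period `k-1`. -/
def Fmat {p t : ℕ} (s : TrtSeq p t) : Matrix (Fin p) (Fin t) ℝ :=
  Matrix.of fun k i =>
    if (k : ℕ) = 0 then 0
    else if s ⟨(k : ℕ) - 1, Nat.lt_of_le_of_lt (Nat.sub_le _ _) k.isLt⟩ = i then 1 else 0

/-- The all-ones `m × m` matrix `J_m`. -/
def Jmat (m : ℕ) : Matrix (Fin m) (Fin m) ℝ := Matrix.of fun _ _ => 1

/-- `B_t = I_t - J_t / t`. -/
def Bmat (t : ℕ) : Matrix (Fin t) (Fin t) ℝ := 1 - ((t : ℝ))⁻¹ • Jmat t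

/-- `B̃ = Σ⁻¹ - Σ⁻¹ J_p Σ⁻¹ / (1_p' Σ⁻¹ 1_p)`. -/
def Btil {p : ℕ} (S : Matrix (Fin p) (Fin p) ℝ) : Matrix (Fin p) (Fin p) ℝ :=
  S⁻¹ - (((fun _ => (1 : ℝ)) : Fin p → ℝ) ⬝ᵥ (S⁻¹ *ᵥ fun _ => (1 : ℝ)))⁻¹ •
    (S⁻¹ * Jmat p * S⁻¹)

/-- `G_1(s) = T_s`, `G_2(s) = F_s`. -/
def Gmat {p t : ℕ} (i : Fin 2) (s : TrtSeq p t) : Matrix (Fin p) (Fin t) ℝ :=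
  if i = 0 then Tmat s else Fmat s

/-- An approximate design: nonnegative weights summing to one. -/
def IsDesign {p t : ℕ} (w : TrtSeq p t → ℝ) : Prop :=
  (∀ s, 0 ≤ w s) ∧ ∑ s : TrtSeq p t, w s = 1

/-- `Ĉ_{sij} = B_t G_i(s)' B̃ G_j(s) B_t`. -/
def Chat {p t : ℕ} (S : Matrix (Fin p) (Fin p) ℝ) (s : TrtSeq p t) (i j : Fin 2) :
    Matrix (Fin t) (Fin t) ℝ :=
  Bmat t * (Gmat i s)ᵀ * Btil S * Gmat j s * Bmat t

/-- `c_{sij} = tr Ĉ_{sij}`. -/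
def cseq {p t : ℕ} (S : Matrix (Fin p) (Fin p) ℝ) (s : TrtSeq p t) (i j : Fin 2) : ℝ :=
  (Chat S s i j).trace

/-- `Ĉ_{dij} = n ∑_s p_s Ĉ_{sij}`. -/
def ChatD {p t : ℕ} (n : ℕ) (S : Matrix (Fin p) (Fin p) ℝ) (w : TrtSeq p t → ℝ)
    (i j : Fin 2) : Matrix (Fin t) (Fin t) ℝ :=
  (n : ℝ) • ∑ s : TrtSeq p t, w s • Chat S s i j

/-- `C_{dij} = Ĉ_{dij} - n (∑_s p_s G_i(s) B_t)' B̃ (∑_s p_s G_j(s) B_t)`. -/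
def CD {p t : ℕ} (n : ℕ) (S : Matrix (Fin p) (Fin p) ℝ) (w : TrtSeq p t → ℝ)
    (i j : Fin 2) : Matrix (Fin t) (Fin t) ℝ :=
  ChatD n S w i j -
    (n : ℝ) • ((∑ s : TrtSeq p t, w s • (Gmat i s * Bmat t))ᵀ * Btil S *
      (∑ s : TrtSeq p t, w s • (Gmat j s * Bmat t)))

/-- `c_{dij} = tr Ĉ_{dij} = n ∑_s p_s c_{sij}`. -/
def cD {p t : ℕ} (n : ℕ) (S : Matrix (Fin p) (Fin p) ℝ) (w : TrtSeq p t → ℝ)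
    (i j : Fin 2) : ℝ :=
  (ChatD n S w i j).trace

/-- Fisher information matrix `C_{d,τ0,λ0}` for the direct treatment effects under the
proportional model. -/
def CInfo {p t : ℕ} (n : ℕ) (S : Matrix (Fin p) (Fin p) ℝ) (w : TrtSeq p t → ℝ)
    (τ0 : Fin t → ℝ) (l0 : ℝ) : Matrix (Fin t) (Fin t) ℝ :=
  CD n S w 0 0 + l0 • (CD n S w 0 1 + CD n S w 1 0) + (l0 ^ 2) • CD n S w 1 1 -
    (τ0 ⬝ᵥ (CD n S w 1 1 *ᵥ τ0))⁻¹ •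
      ((CD n S w 0 1 + l0 • CD n S w 1 1) * vecMulVec τ0 τ0 *
        (CD n S w 1 0 + l0 • CD n S w 1 1))

/-- Permutation matrix `S_σ` with `(S_σ)_{j,i} = 1` iff `i = σ j`. -/
def Smat {t : ℕ} (σ : Equiv.Perm (Fin t)) : Matrix (Fin t) (Fin t) ℝ :=
  Matrix.of fun j i => if i = σ j then 1 else 0

/-- The relabelled sequence `σ ∘ s`. -/
def permSeq {p t : ℕ} (σ : Equiv.Perm (Fin t)) (s : TrtSeq p t) : TrtSeq p t := fun k => σ (s k)

/-- The design `σ d`, with weights `(σd)_s = p_{σ⁻¹ ∘ s}`. -/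
def permDesign {p t : ℕ} (σ : Equiv.Perm (Fin t)) (w : TrtSeq p t → ℝ) : TrtSeq p t → ℝ :=
  fun s => w (permSeq σ⁻¹ s)

/-- A design is symmetric if its weights are invariant under treatment relabelling. -/
def IsSymmetricDesign {p t : ℕ} (w : TrtSeq p t → ℝ) : Prop :=
  ∀ (σ : Equiv.Perm (Fin t)) (s : TrtSeq p t), w (permSeq σ s) = w s

/-- The symmetrized design `d*` with weights `p*_s = (1/t!) ∑_σ p_{σ⁻¹ ∘ s}`. -/
def symmetrize {p t : ℕ} (w : TrtSeq p t → ℝ) : TrtSeq p t → ℝ :=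
  fun s => ((Nat.factorial t : ℝ))⁻¹ * ∑ σ : Equiv.Perm (Fin t), permDesign σ w s

/-- `q_s(x) = c_{s11} + 2 c_{s12} x + c_{s22} x²`. -/
def qSeq {p t : ℕ} (S : Matrix (Fin p) (Fin p) ℝ) (s : TrtSeq p t) (x : ℝ) : ℝ :=
  cseq S s 0 0 + 2 * cseq S s 0 1 * x + cseq S s 1 1 * x ^ 2

/-- `q(x) = max_{s ∈ S} q_s(x)`. -/
def qMax (p t : ℕ) (S : Matrix (Fin p) (Fin p) ℝ) (x : ℝ) : ℝ :=
  sSup (Set.range fun s : TrtSeq p t => qSeq S s x)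

/-- `y* = inf_x q(x)`. -/
def yStar (p t : ℕ) (S : Matrix (Fin p) (Fin p) ℝ) : ℝ := ⨅ x : ℝ, qMax p t S x

/-- `q_d(x) = ∑_s p_s q_s(x)`. -/
def qD {p t : ℕ} (S : Matrix (Fin p) (Fin p) ℝ) (w : TrtSeq p t → ℝ) (x : ℝ) : ℝ :=
  ∑ s : TrtSeq p t, w s * qSeq S s x

/-- `x_d = -c_{d12}/c_{d22}`. -/
def xD {p t : ℕ} (n : ℕ) (S : Matrix (Fin p) (Fin p) ℝ) (w : TrtSeq p t → ℝ) : ℝ :=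
  -(cD n S w 0 1) / cD n S w 1 1

/-- An exchangeable prior: a probability measure on `{τ : 1'τ = 0, τ ≠ 0}` that is
invariant under all coordinate permutations of `ℝ^t`. -/
def IsExchangeablePrior {t : ℕ} (g : Measure (Fin t → ℝ)) : Prop :=
  IsProbabilityMeasure g ∧
    g {τ : Fin t → ℝ | ¬((∑ i, τ i) = 0 ∧ τ ≠ 0)} = 0 ∧
    ∀ σ : Equiv.Perm (Fin t), Measure.map (fun τ i => τ (σ i)) g = g

/-- `m_d(τ0) = min {ℓ' C_{d,τ0,λ0} ℓ : 1'ℓ = 0, ℓ'ℓ = 1}`. -/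
def mD {p t : ℕ} (n : ℕ) (S : Matrix (Fin p) (Fin p) ℝ) (w : TrtSeq p t → ℝ) (l0 : ℝ)
    (τ0 : Fin t → ℝ) : ℝ :=
  sInf {v : ℝ | ∃ l : Fin t → ℝ, (∑ i, l i) = 0 ∧ l ⬝ᵥ l = 1 ∧
    v = l ⬝ᵥ (CInfo n S w τ0 l0 *ᵥ l)}

/-- The E-criterion value `E_{g,λ0}(d) = ∫ m_d(τ0) g(dτ0)`. -/
def Ecrit {p t : ℕ} (n : ℕ) (S : Matrix (Fin p) (Fin p) ℝ) (g : Measure (Fin t → ℝ))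
    (l0 : ℝ) (w : TrtSeq p t → ℝ) : ℝ :=
  ∫ τ0, mD n S w l0 τ0 ∂g

/-- Competing designs for E-optimality: designs with a.e. positive `τ0' C_{d22} τ0`
and `g`-integrable `m_d`. -/
def EAdmissible {p t : ℕ} (n : ℕ) (S : Matrix (Fin p) (Fin p) ℝ) (g : Measure (Fin t → ℝ))
    (l0 : ℝ) (w : TrtSeq p t → ℝ) : Prop :=
  IsDesign w ∧ (∀ᵐ τ0 ∂g, 0 < τ0 ⬝ᵥ (CD n S w 1 1 *ᵥ τ0)) ∧
    Integrable (mD n S w l0) g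

/-- `d` is `E_{g,λ0}`-optimal. -/
def EOptimal {p t : ℕ} (n : ℕ) (S : Matrix (Fin p) (Fin p) ℝ) (g : Measure (Fin t → ℝ))
    (l0 : ℝ) (w : TrtSeq p t → ℝ) : Prop :=
  ∀ w' : TrtSeq p t → ℝ, EAdmissible n S g l0 w' → Ecrit n S g l0 w' ≤ Ecrit n S g l0 w

/-- A pseudo symmetric design: treatments equireplicated in each period,
and all `C_{dij}` completely symmetric. -/
def IsPseudoSymmetric {p t : ℕ} (n : ℕ) (S : Matrix (Fin p) (Fin p) ℝ)
    (w : TrtSeq p t → ℝ) : Prop :=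
  (∀ (k : Fin p) (i : Fin t),
    (∑ s ∈ Finset.univ.filter fun s : TrtSeq p t => s k = i, w s) = 1 / (t : ℝ)) ∧
  ∀ i j : Fin 2, ∃ a b : ℝ, CD n S w i j = a • (1 : Matrix (Fin t) (Fin t) ℝ) + b • Jmat t

/-- Eigenvalues of a (Hermitian) matrix sorted increasingly with multiplicity. -/
def sortedEigs {t : ℕ} (C : Matrix (Fin t) (Fin t) ℝ) : Fin t → ℝ :=
  if h : C.IsHermitian then (fun i => h.eigenvalues (Tuple.sort h.eigenvalues i))
  else fun _ => 0

/-- `Φ_D(C) = (∏_{i=1}^{t-1} a_i)^{1/(t-1)}` (eigenvalues sorted increasingly). -/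
def PhiD {t : ℕ} (C : Matrix (Fin t) (Fin t) ℝ) : ℝ :=
  (∏ i ∈ Finset.univ.filter fun i : Fin t => (i : ℕ) ≠ 0, sortedEigs C i) ^ (((t : ℝ) - 1)⁻¹)

/-- `Φ_A(C) = (t-1)(∑_{i=1}^{t-1} a_i⁻¹)⁻¹` if `a_1 > 0`, else `0`. -/
def PhiA {t : ℕ} (C : Matrix (Fin t) (Fin t) ℝ) : ℝ :=
  if ∀ i : Fin t, (i : ℕ) ≠ 0 → 0 < sortedEigs C i then
    ((t : ℝ) - 1) *
      (∑ i ∈ Finset.univ.filter fun i : Fin t => (i : ℕ) ≠ 0, (sortedEigs C i)⁻¹)⁻¹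
  else 0

/-- `Φ_T(C) = tr(C)/(t-1)`. -/
def PhiT {t : ℕ} (C : Matrix (Fin t) (Fin t) ℝ) : ℝ := C.trace / ((t : ℝ) - 1)

/-- The criterion value `∫ Φ(C_{d,τ0,λ0}) g(dτ0)`. -/
def PhiCrit {p t : ℕ} (n : ℕ) (S : Matrix (Fin p) (Fin p) ℝ)
    (Phi : Matrix (Fin t) (Fin t) ℝ → ℝ) (g : Measure (Fin t → ℝ)) (l0 : ℝ)
    (w : TrtSeq p t → ℝ) : ℝ :=
  ∫ τ0, Phi (CInfo n S w τ0 l0) ∂g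

/-- Competing designs for a `Φ`-criterion. -/
def PhiAdmissible {p t : ℕ} (n : ℕ) (S : Matrix (Fin p) (Fin p) ℝ)
    (Phi : Matrix (Fin t) (Fin t) ℝ → ℝ) (g : Measure (Fin t → ℝ)) (l0 : ℝ)
    (w : TrtSeq p t → ℝ) : Prop :=
  IsDesign w ∧ (∀ᵐ τ0 ∂g, 0 < τ0 ⬝ᵥ (CD n S w 1 1 *ᵥ τ0)) ∧
    Integrable (fun τ0 => Phi (CInfo n S w τ0 l0)) g

/-- `d` is `Φ_{g,λ0}`-optimal. -/
def PhiOptimal {p t : ℕ} (n : ℕ) (S : Matrix (Fin p) (Fin p) ℝ)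
    (Phi : Matrix (Fin t) (Fin t) ℝ → ℝ) (g : Measure (Fin t → ℝ)) (l0 : ℝ)
    (w : TrtSeq p t → ℝ) : Prop :=
  ∀ w' : TrtSeq p t → ℝ, PhiAdmissible n S Phi g l0 w' →
    PhiCrit n S Phi g l0 w' ≤ PhiCrit n S Phi g l0 w

/-- `H_1(s) = F_s`, `H_2(s) = T_s + λ0 F_s` (for estimating `λ`). -/
def Hmat {p t : ℕ} (l0 : ℝ) (i : Fin 2) (s : TrtSeq p t) : Matrix (Fin p) (Fin t) ℝ :=
  if i = 0 then Fmat s else Tmat s + l0 • Fmat s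

/-- `Â_{sij} = B_t H_i(s)' B̃ H_j(s) B_t`. -/
def Ahat {p t : ℕ} (S : Matrix (Fin p) (Fin p) ℝ) (l0 : ℝ) (s : TrtSeq p t) (i j : Fin 2) :
    Matrix (Fin t) (Fin t) ℝ :=
  Bmat t * (Hmat l0 i s)ᵀ * Btil S * Hmat l0 j s * Bmat t

/-- `h_{sij} = tr Â_{sij}`. -/
def hseq {p t : ℕ} (S : Matrix (Fin p) (Fin p) ℝ) (l0 : ℝ) (s : TrtSeq p t) (i j : Fin 2) : ℝ :=
  (Ahat S l0 s i j).trace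

/-- `Â_{dij} = n ∑_s p_s Â_{sij}`. -/
def AhatD {p t : ℕ} (n : ℕ) (S : Matrix (Fin p) (Fin p) ℝ) (l0 : ℝ) (w : TrtSeq p t → ℝ)
    (i j : Fin 2) : Matrix (Fin t) (Fin t) ℝ :=
  (n : ℝ) • ∑ s : TrtSeq p t, w s • Ahat S l0 s i j

/-- `A_{dij} = Â_{dij} - n (∑_s p_s H_i(s) B_t)' B̃ (∑_s p_s H_j(s) B_t)`. -/
def AD {p t : ℕ} (n : ℕ) (S : Matrix (Fin p) (Fin p) ℝ) (l0 : ℝ) (w : TrtSeq p t → ℝ)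
    (i j : Fin 2) : Matrix (Fin t) (Fin t) ℝ :=
  AhatD n S l0 w i j -
    (n : ℝ) • ((∑ s : TrtSeq p t, w s • (Hmat l0 i s * Bmat t))ᵀ * Btil S *
      (∑ s : TrtSeq p t, w s • (Hmat l0 j s * Bmat t)))

/-- `G` is a generalized inverse of `A`. -/
def IsGInv {t : ℕ} (A G : Matrix (Fin t) (Fin t) ℝ) : Prop := A * G * A = A

/-- `A_d(G) = A_{d11} - A_{d12} G A_{d21}` with `A_{d21} = A_{d12}'`. -/
def ADfun {p t : ℕ} (n : ℕ) (S : Matrix (Fin p) (Fin p) ℝ) (l0 : ℝ) (w : TrtSeq p t → ℝ)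
    (G : Matrix (Fin t) (Fin t) ℝ) : Matrix (Fin t) (Fin t) ℝ :=
  AD n S l0 w 0 0 - AD n S l0 w 0 1 * G * (AD n S l0 w 0 1)ᵀ

/-- `r_s(x) = h_{s11} + 2 h_{s12} x + h_{s22} x²`. -/
def rSeq {p t : ℕ} (S : Matrix (Fin p) (Fin p) ℝ) (l0 : ℝ) (s : TrtSeq p t) (x : ℝ) : ℝ :=
  hseq S l0 s 0 0 + 2 * hseq S l0 s 0 1 * x + hseq S l0 s 1 1 * x ^ 2

/-- `r(x) = max_s r_s(x)`. -/
def rMax (p t : ℕ) (S : Matrix (Fin p) (Fin p) ℝ) (l0 : ℝ) (x : ℝ) : ℝ :=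
  sSup (Set.range fun s : TrtSeq p t => rSeq S l0 s x)

/-- `y_0 = inf_x r(x)`. -/
def yZero (p t : ℕ) (S : Matrix (Fin p) (Fin p) ℝ) (l0 : ℝ) : ℝ := ⨅ x : ℝ, rMax p t S l0 x

/-- Relabelling invariant matrices with zero row sums are multiples of `B_t`. -/
lemma symm_entries {t : ℕ} (ht : 3 ≤ t) (M : Matrix (Fin t) (Fin t) ℝ)
    (hM : ∀ (σ : Equiv.Perm (Fin t)) a b, M (σ a) (σ b) = M a b)
    (hr : ∀ a, ∑ b, M a b = 0) : M = (M.trace / ((t : ℝ) - 1)) • Bmat t := by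
  have ht' : (3 : ℝ) ≤ t := by exact_mod_cast ht
  have hdiag : ∀ a b, M a a = M b b := by
    intro a b
    have := hM (Equiv.swap a b) a a
    simpa using this.symm
  have hoff : ∀ a b c, b ≠ a → c ≠ a → M a b = M a c := by
    intro a b c hb hc
    have := hM (Equiv.swap b c) a b
    rw [Equiv.swap_apply_left, Equiv.swap_apply_of_ne_of_ne hb.symm hc.symm] at this
    exact this.symm
  have htr : ∀ a, M.trace = t * M a a := by
    intro a
    show ∑ i, M i i = t * M a a
    rw [Finset.sum_congr rfl (fun i _ => hdiag i a)]
    simp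
  have hrow : ∀ a b, b ≠ a → M a a + ((t : ℝ) - 1) * M a b = 0 := by
    intro a b hb
    rw [← hr a, ← Finset.add_sum_erase _ _ (Finset.mem_univ a)]
    rw [Finset.sum_congr rfl
      (fun c hc => hoff a c b (Finset.ne_of_mem_erase hc) hb)]
    rw [Finset.sum_const, Finset.card_erase_of_mem (Finset.mem_univ a)]
    simp
    left
    rw [Nat.cast_sub (by omega)]
    simp
  ext a b
  have h1 : (t : ℝ) - 1 ≠ 0 := by linarith
  have h2 : (t : ℝ) ≠ 0 := by linarith
  by_cases h : b = a
  · subst h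
    simp [Bmat, Jmat, htr b]
    field_simp
  · have := hrow a b h
    simp [Bmat, Jmat, htr a, Ne.symm h]
    field_simp
    linarith

lemma minimax_half {ι : Type*} [Fintype ι] (a b c : ι → ℝ) (y : ℝ)
    (hy : ∀ i, a i ≤ y) (h : ∀ x, ∃ i, y ≤ a i + b i * x + c i * x ^ 2) :
    ∃ i, a i = y ∧ 0 ≤ b i := by
  by_contra! hcon
  have key : ∀ i, ∀ᶠ x in nhdsWithin (0 : ℝ) (Set.Ioi 0),
      a i + b i * x + c i * x ^ 2 < y := by
    intro i
    rcases (hy i).lt_or_eq with h1 | h1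
    · have hc : Continuous fun x : ℝ => a i + b i * x + c i * x ^ 2 := by fun_prop
      have := hc.tendsto 0
      exact (this.eventually_lt_const (by simpa using h1)).filter_mono nhdsWithin_le_nhds
    · have hb := hcon i h1
      have hc : Continuous fun x : ℝ => b i + c i * x := by fun_prop
      have h2 := ((hc.tendsto 0).eventually_lt_const
        (show b i + c i * 0 < 0 by simpa using hb)).filter_mono
          (nhdsWithin_le_nhds (s := Set.Ioi (0 : ℝ)))
      filter_upwards [h2, self_mem_nhdsWithin] with x hx hx0
      have hx0 : 0 < x := hx0
      nlinarith
  obtain ⟨x, hx⟩ := (Filter.eventually_all.2 key).exists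
  obtain ⟨i, hi⟩ := h x
  exact absurd (hx i) (not_lt.2 hi)

lemma minimax_quad {ι : Type*} [Fintype ι] [Nonempty ι] (a b c : ι → ℝ) (hc : ∀ i, 0 < c i) :
    ∃ (w : ι → ℝ) (x0 : ℝ), (∀ i, 0 ≤ w i) ∧ ∑ i, w i = 1 ∧
      ∀ x i, a i + 2 * b i * x0 + c i * x0 ^ 2 ≤
        ∑ j, w j * (a j + 2 * b j * x + c j * x ^ 2) := by
  let f : ι → ℝ → ℝ := fun i x => a i + 2 * b i * x + c i * x ^ 2
  let q : ℝ → ℝ := fun x => Finset.univ.sup' Finset.univ_nonempty (fun i => f i x)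
  have hq : Continuous q := by
    apply Continuous.finset_sup'_apply
    intro i _
    show Continuous fun x => a i + 2 * b i * x + c i * x ^ 2
    fun_prop
  have hfq : ∀ i x, f i x ≤ q x := fun i x =>
    Finset.le_sup' (fun i => f i x) (Finset.mem_univ i)
  obtain ⟨i0⟩ := ‹Nonempty ι›
  have hco : Filter.Tendsto (f i0) (Filter.cocompact ℝ) Filter.atTop := by
    have h1 : Filter.Tendsto (fun x : ℝ => c i0 * (|x| + 0) ^ 2 + - (2 * |b i0|) * |x| )
        (Filter.cocompact ℝ) Filter.atTop := by
      have habs : Filter.Tendsto (fun x : ℝ => |x|) (Filter.cocompact ℝ) Filter.atTop :=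
        tendsto_norm_cocompact_atTop
      have h2 : Filter.Tendsto (fun u : ℝ => u * (c i0 * u + - (2 * |b i0|)))
          Filter.atTop Filter.atTop := by
        apply Filter.Tendsto.atTop_mul_atTop₀ Filter.tendsto_id
        apply Filter.tendsto_atTop_add_const_right
        exact Filter.tendsto_id.const_mul_atTop (hc i0)
      refine (h2.comp habs).congr ?_
      intro x
      simp only [Function.comp]
      ring
    have h3 := Filter.tendsto_atTop_add_const_left _ (a i0) h1
    refine Filter.tendsto_atTop_mono ?_ h3
    intro x
    have h4 : -(|b i0| * |x|) ≤ b i0 * x := by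
      rw [← abs_mul]; exact neg_abs_le _
    have h5 : |x| ^ 2 = x ^ 2 := sq_abs x
    show a i0 + _ ≤ a i0 + 2 * b i0 * x + c i0 * x ^ 2
    rw [add_zero, h5]
    nlinarith
  have hqco : Filter.Tendsto q (Filter.cocompact ℝ) Filter.atTop :=
    Filter.tendsto_atTop_mono (fun x => hfq i0 x) hco
  obtain ⟨x0, hx0⟩ := hq.exists_forall_le hqco
  have hex : ∀ x, ∃ i, q x0 ≤ f i x := by
    intro x
    obtain ⟨i, -, hi⟩ := Finset.exists_mem_eq_sup' Finset.univ_nonempty (fun i => f i x)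
    exact ⟨i, (hx0 x).trans hi.le⟩
  obtain ⟨i, hi, hbi⟩ := minimax_half (fun i => f i x0) (fun i => 2 * b i + 2 * c i * x0) c
    (q x0) (fun i => hfq i x0) (by
      intro x
      obtain ⟨i, hi⟩ := hex (x0 + x)
      refine ⟨i, hi.trans (le_of_eq ?_)⟩
      show a i + 2 * b i * (x0 + x) + c i * (x0 + x) ^ 2 =
        a i + 2 * b i * x0 + c i * x0 ^ 2 + _ + _
      ring)
  obtain ⟨j, hj, hbj⟩ := minimax_half (fun i => f i x0) (fun i => -(2 * b i + 2 * c i * x0)) c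
    (q x0) (fun i => hfq i x0) (by
      intro x
      obtain ⟨i, hi⟩ := hex (x0 - x)
      refine ⟨i, hi.trans (le_of_eq ?_)⟩
      show a i + 2 * b i * (x0 - x) + c i * (x0 - x) ^ 2 =
        a i + 2 * b i * x0 + c i * x0 ^ 2 + _ + _
      ring)
  have hpair : ∃ θ : ℝ, 0 ≤ θ ∧ θ ≤ 1 ∧
      θ * (2 * b i + 2 * c i * x0) + (1 - θ) * (2 * b j + 2 * c j * x0) = 0 := by
    set u := 2 * b i + 2 * c i * x0
    set v := 2 * b j + 2 * c j * x0
    have hv : v ≤ 0 := by simpa using hbj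
    have hu : 0 ≤ u := hbi
    by_cases h0 : u - v = 0
    · exact ⟨0, le_rfl, zero_le_one, by linarith⟩
    · have : 0 < u - v := lt_of_le_of_ne (by linarith) (Ne.symm h0)
      refine ⟨-v / (u - v), div_nonneg (by linarith) this.le, ?_, ?_⟩
      · rw [div_le_one this]; linarith
      · field_simp; ring
  obtain ⟨θ, h0, h1, hθ⟩ := hpair
  refine ⟨fun k => θ * (if k = i then 1 else 0) + (1 - θ) * (if k = j then 1 else 0), x0,
    ?_, ?_, ?_⟩
  · intro k
    have : 0 ≤ 1 - θ := by linarith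
    positivity
  · simp [Finset.sum_add_distrib]
  · intro x k
    refine (hfq k x0).trans ?_
    have hsum : ∀ F : ι → ℝ, ∑ k, (θ * (if k = i then 1 else 0) +
        (1 - θ) * (if k = j then 1 else 0)) * F k = θ * F i + (1 - θ) * F j := by
      intro F
      simp [add_mul, Finset.sum_add_distrib]
    rw [hsum]
    have e1 : a i + 2 * b i * x0 + c i * x0 ^ 2 = q x0 := hi
    have e2 : a j + 2 * b j * x0 + c j * x0 ^ 2 = q x0 := hj
    have hci := mul_nonneg h0 (mul_nonneg (hc i).le (sq_nonneg (x - x0)))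
    have hcj := mul_nonneg (sub_nonneg.2 h1) (mul_nonneg (hc j).le (sq_nonneg (x - x0)))
    have : θ * (a i + 2 * b i * x + c i * x ^ 2) + (1 - θ) * (a j + 2 * b j * x + c j * x ^ 2)
      = θ * (a i + 2 * b i * x0 + c i * x0 ^ 2) + (1 - θ) * (a j + 2 * b j * x0 + c j * x0 ^ 2)
        + (θ * (2 * b i + 2 * c i * x0) + (1 - θ) * (2 * b j + 2 * c j * x0)) * (x - x0)
        + θ * (c i * (x - x0) ^ 2) + (1 - θ) * (c j * (x - x0) ^ 2) := by ring
    rw [this, hθ, e1, e2]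
    nlinarith

lemma Bmat_transpose (t : ℕ) : (Bmat t)ᵀ = Bmat t := by
  ext i j
  simp [Bmat, Jmat, Matrix.one_apply, eq_comm]

lemma Jmat_transpose (t : ℕ) : (Jmat t)ᵀ = Jmat t := by
  ext i j
  simp [Jmat]

lemma Bmat_row_sum {t : ℕ} (ht : t ≠ 0) (a : Fin t) : ∑ b, Bmat t a b = 0 := by
  have : (t : ℝ) ≠ 0 := by exact_mod_cast ht
  simp [Bmat, Jmat, Matrix.one_apply, Finset.sum_sub_distrib, this]

lemma mul_Bmat_row_sum {t : ℕ} (ht : t ≠ 0) {m : Type*} (X : Matrix m (Fin t) ℝ) (a : m) :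
    ∑ b, (X * Bmat t) a b = 0 := by
  simp only [Matrix.mul_apply]
  rw [Finset.sum_comm]
  simp [← Finset.mul_sum, Bmat_row_sum ht]

lemma Bmat_mulVec {t : ℕ} (v : Fin t → ℝ) (hv : ∑ i, v i = 0) : Bmat t *ᵥ v = v := by
  have : Jmat t *ᵥ v = 0 := by
    ext i; simp [Jmat, Matrix.mulVec, dotProduct, hv]
  simp [Bmat, Matrix.sub_mulVec, Matrix.smul_mulVec, this]

lemma Bmat_trace {t : ℕ} (ht : t ≠ 0) : (Bmat t).trace = (t : ℝ) - 1 := by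
  have : (t : ℝ) ≠ 0 := by exact_mod_cast ht
  simp [Bmat, Jmat, Matrix.trace, Finset.sum_sub_distrib, this]

lemma Sinv_symm {p : ℕ} {S : Matrix (Fin p) (Fin p) ℝ} (hS : S.PosDef) : (S⁻¹)ᵀ = S⁻¹ := by
  have := hS.inv.isHermitian
  simpa [Matrix.IsHermitian, Matrix.conjTranspose_eq_transpose_of_trivial] using this

lemma Btil_transpose {p : ℕ} {S : Matrix (Fin p) (Fin p) ℝ} (hS : S.PosDef) :
    (Btil S)ᵀ = Btil S := by
  simp only [Btil, Matrix.transpose_sub, Matrix.transpose_smul, Matrix.transpose_mul,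
    Sinv_symm hS, Jmat_transpose, Matrix.mul_assoc]

lemma quad_symm {m : Type*} [Fintype m] {A : Matrix m m ℝ} (hA : Aᵀ = A) (u v : m → ℝ) :
    u ⬝ᵥ (A *ᵥ v) = v ⬝ᵥ (A *ᵥ u) := by
  rw [Matrix.dotProduct_mulVec, ← Matrix.mulVec_transpose, hA, dotProduct_comm]

lemma Btil_quad {p : ℕ} (hp : 2 ≤ p) {S : Matrix (Fin p) (Fin p) ℝ} (hS : S.PosDef)
    (v : Fin p → ℝ) :
    ∃ c : ℝ, v ⬝ᵥ (Btil S *ᵥ v) =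
      (v - c • (fun _ => (1 : ℝ))) ⬝ᵥ (S⁻¹ *ᵥ (v - c • (fun _ => (1 : ℝ)))) := by
  set o : Fin p → ℝ := fun _ => 1 with ho
  have hone : 0 < o ⬝ᵥ (S⁻¹ *ᵥ o) := by
    have hne : o ≠ 0 := by
      intro h
      have := congrFun h ⟨0, by omega⟩
      simp [ho] at this
    have := hS.inv.dotProduct_mulVec_pos hne
    simpa using this
  have hJ : ∀ u : Fin p → ℝ, Jmat p *ᵥ u = (o ⬝ᵥ u) • o := by
    intro u; ext i; simp [Jmat, Matrix.mulVec, dotProduct, ho]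
  refine ⟨(o ⬝ᵥ (S⁻¹ *ᵥ v)) / (o ⬝ᵥ (S⁻¹ *ᵥ o)), ?_⟩
  have hsw := quad_symm (Sinv_symm hS) v o
  simp only [Btil, ← ho, Matrix.sub_mulVec, Matrix.smul_mulVec, ← Matrix.mulVec_mulVec, hJ,
    Matrix.mulVec_smul, Matrix.mulVec_sub, dotProduct_sub, sub_dotProduct, dotProduct_smul,
    smul_dotProduct, smul_eq_mul, hsw]
  field_simp
  ring

lemma Btil_nonneg {p : ℕ} (hp : 2 ≤ p) {S : Matrix (Fin p) (Fin p) ℝ} (hS : S.PosDef)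
    (v : Fin p → ℝ) : 0 ≤ v ⬝ᵥ (Btil S *ᵥ v) := by
  obtain ⟨c, hc⟩ := Btil_quad hp hS v
  rw [hc]
  have := hS.inv.posSemidef.dotProduct_mulVec_nonneg (v - c • (fun _ => (1 : ℝ)))
  simpa using this

lemma Btil_pos {p : ℕ} (hp : 2 ≤ p) {S : Matrix (Fin p) (Fin p) ℝ} (hS : S.PosDef)
    (v : Fin p → ℝ) (i j : Fin p) (hij : v i ≠ v j) : 0 < v ⬝ᵥ (Btil S *ᵥ v) := by
  obtain ⟨c, hc⟩ := Btil_quad hp hS v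
  rw [hc]
  have hne : v - c • (fun _ => (1 : ℝ)) ≠ 0 := by
    intro h
    have h1 := congrFun h i
    have h2 := congrFun h j
    simp at h1 h2
    exact hij (by linarith)
  have := hS.inv.dotProduct_mulVec_pos hne
  simpa using this

lemma trace_quad {p t : ℕ} (X : Matrix (Fin p) (Fin t) ℝ) (A : Matrix (Fin p) (Fin p) ℝ) :
    (Xᵀ * A * X).trace = ∑ a, (X.col a) ⬝ᵥ (A *ᵥ (X.col a)) := by
  unfold Matrix.trace
  refine Finset.sum_congr rfl fun a _ => ?_
  rw [Matrix.mul_assoc, Matrix.diag_apply, Matrix.mul_apply]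
  rfl

lemma Chat_eq {p t : ℕ} (S : Matrix (Fin p) (Fin p) ℝ) (s : TrtSeq p t) (i j : Fin 2) :
    Chat S s i j = (Gmat i s * Bmat t)ᵀ * Btil S * (Gmat j s * Bmat t) := by
  simp [Chat, Matrix.transpose_mul, Bmat_transpose, Matrix.mul_assoc]

lemma Chat_transpose {p t : ℕ} {S : Matrix (Fin p) (Fin p) ℝ} (hS : S.PosDef) (s : TrtSeq p t)
    (i j : Fin 2) : (Chat S s i j)ᵀ = Chat S s j i := by
  simp [Chat_eq, Matrix.transpose_mul, Btil_transpose hS, Matrix.mul_assoc]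

lemma cseq_symm {p t : ℕ} {S : Matrix (Fin p) (Fin p) ℝ} (hS : S.PosDef) (s : TrtSeq p t)
    (i j : Fin 2) : cseq S s i j = cseq S s j i := by
  rw [cseq, ← Matrix.trace_transpose, Chat_transpose hS]; rfl

lemma cseq_pos {p t : ℕ} (hp : 2 ≤ p) (ht : 3 ≤ t) {S : Matrix (Fin p) (Fin p) ℝ}
    (hS : S.PosDef) (s : TrtSeq p t) : 0 < cseq S s 1 1 := by
  have ht' : (3 : ℝ) ≤ t := by exact_mod_cast ht
  rw [cseq, Chat_eq, trace_quad]
  refine Finset.sum_pos' (fun a _ => Btil_nonneg hp hS _)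
    ⟨s ⟨0, by omega⟩, Finset.mem_univ _, Btil_pos hp hS _ ⟨0, by omega⟩ ⟨1, by omega⟩ ?_⟩
  simp [Matrix.col, Gmat, Fmat, Matrix.mul_apply, Bmat, Jmat]
  intro h
  have : (t : ℝ) * (t : ℝ)⁻¹ = 1 := mul_inv_cancel₀ (by linarith)
  nlinarith

lemma Chat_row_sum {p t : ℕ} (ht : t ≠ 0) (S : Matrix (Fin p) (Fin p) ℝ) (s : TrtSeq p t)
    (i j : Fin 2) (a : Fin t) : ∑ b, Chat S s i j a b = 0 :=
  mul_Bmat_row_sum ht _ a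

lemma Gmat_perm {p t : ℕ} (σ : Equiv.Perm (Fin t)) (s : TrtSeq p t) (i : Fin 2) (k a) :
    Gmat i (permSeq σ s) k (σ a) = Gmat i s k a := by
  unfold Gmat
  split_ifs <;> simp [Tmat, Fmat, permSeq]

lemma GB_perm {p t : ℕ} (σ : Equiv.Perm (Fin t)) (s : TrtSeq p t) (i : Fin 2) :
    (Gmat i (permSeq σ s) * Bmat t).submatrix id σ = Gmat i s * Bmat t := by
  ext k a
  simp only [Matrix.submatrix_apply, id, Matrix.mul_apply]
  rw [← Equiv.sum_comp σ]
  refine Finset.sum_congr rfl fun b _ => ?_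
  rw [Gmat_perm]
  simp [Bmat, Jmat, Matrix.one_apply]

lemma Chat_perm {p t : ℕ} (S : Matrix (Fin p) (Fin p) ℝ) (σ : Equiv.Perm (Fin t))
    (s : TrtSeq p t) (i j : Fin 2) :
    (Chat S (permSeq σ s) i j).submatrix σ σ = Chat S s i j := by
  rw [Chat_eq, Chat_eq, ← GB_perm σ s i, ← GB_perm σ s j]
  ext a b
  simp [Matrix.mul_apply]

lemma cseq_perm {p t : ℕ} (S : Matrix (Fin p) (Fin p) ℝ) (σ : Equiv.Perm (Fin t))
    (s : TrtSeq p t) (i j : Fin 2) : cseq S (permSeq σ s) i j = cseq S s i j := by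
  unfold cseq
  rw [← Chat_perm S σ s i j]
  simp only [Matrix.trace, Matrix.diag_apply, Matrix.submatrix_apply]
  exact (Equiv.sum_comp σ (fun a => Chat S (permSeq σ s) i j a a)).symm

/-- Relabelling as a permutation of the set of sequences. -/
def permSeqEquiv {p t : ℕ} (σ : Equiv.Perm (Fin t)) : TrtSeq p t ≃ TrtSeq p t :=
  Equiv.arrowCongr (Equiv.refl _) σ

lemma permSeqEquiv_apply {p t : ℕ} (σ : Equiv.Perm (Fin t)) (s : TrtSeq p t) :
    permSeqEquiv σ s = permSeq σ s := rfl

lemma CD_of_symm {p t : ℕ} (ht : 3 ≤ t) (n : ℕ) (S : Matrix (Fin p) (Fin p) ℝ)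
    (w : TrtSeq p t → ℝ) (hw : IsSymmetricDesign w) (i j : Fin 2) :
    CD n S w i j = (cD n S w i j / ((t : ℝ) - 1)) • Bmat t := by
  have ht0 : t ≠ 0 := by omega
  have hmean : ∀ j, (∑ s : TrtSeq p t, w s • (Gmat j s * Bmat t)) = 0 := by
    intro j
    set N := (∑ s : TrtSeq p t, w s • (Gmat j s * Bmat t)) with hN
    have hinv : ∀ (σ : Equiv.Perm (Fin t)) k a, N k (σ a) = N k a := by
      intro σ k a
      simp only [hN, Matrix.sum_apply, Matrix.smul_apply, smul_eq_mul]
      rw [← Equiv.sum_comp (permSeqEquiv σ)]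
      refine Finset.sum_congr rfl fun s _ => ?_
      rw [permSeqEquiv_apply, hw, ← GB_perm σ s j]
      rfl
    have hrow : ∀ k, ∑ a, N k a = 0 := by
      intro k
      simp only [hN, Matrix.sum_apply, Matrix.smul_apply, smul_eq_mul]
      rw [Finset.sum_comm]
      simp [← Finset.mul_sum, mul_Bmat_row_sum ht0]
    ext k a
    have h1 : ∀ b, N k b = N k a := by
      intro b
      have := hinv (Equiv.swap a b) k a
      simpa using this
    have h2 := hrow k
    rw [Finset.sum_congr rfl (fun b _ => h1 b)] at h2
    simpa [ht0] using h2
  rw [CD, hmean, hmean]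
  simp only [Matrix.mul_zero, smul_zero, sub_zero]
  refine symm_entries ht _ ?_ ?_
  · intro σ a b
    simp only [ChatD, Matrix.sum_apply, Matrix.smul_apply, smul_eq_mul]
    congr 1
    rw [← Equiv.sum_comp (permSeqEquiv σ)]
    refine Finset.sum_congr rfl fun s _ => ?_
    rw [permSeqEquiv_apply, hw, ← Chat_perm S σ s i j]
    rfl
  · intro a
    simp only [ChatD, Matrix.sum_apply, Matrix.smul_apply, smul_eq_mul]
    rw [← Finset.mul_sum, Finset.sum_comm]
    simp [← Finset.mul_sum, Chat_row_sum ht0]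

lemma cD_eq {p t : ℕ} (n : ℕ) (S : Matrix (Fin p) (Fin p) ℝ) (w : TrtSeq p t → ℝ) (i j : Fin 2) :
    cD n S w i j = n * ∑ s, w s * cseq S s i j := by
  simp [cD, ChatD, cseq, Matrix.trace_smul, Matrix.trace_sum]

lemma quad_rank_one {t : ℕ} (X Y : Matrix (Fin t) (Fin t) ℝ) (τ l : Fin t → ℝ) :
    l ⬝ᵥ ((X * vecMulVec τ τ * Y) *ᵥ l) = (l ⬝ᵥ (X *ᵥ τ)) * (τ ⬝ᵥ (Y *ᵥ l)) := by
  rw [Matrix.mul_assoc, ← Matrix.mulVec_mulVec, ← Matrix.mulVec_mulVec, Matrix.vecMulVec_mulVec]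
  simp [Matrix.mulVec_smul, mul_comm]

lemma CD_transpose {p t : ℕ} (n : ℕ) {S : Matrix (Fin p) (Fin p) ℝ} (hS : S.PosDef)
    (w : TrtSeq p t → ℝ) (i j : Fin 2) : (CD n S w i j)ᵀ = CD n S w j i := by
  simp only [CD, ChatD, Matrix.transpose_sub, Matrix.transpose_smul, Matrix.transpose_sum,
    Chat_transpose hS, Matrix.transpose_mul, Btil_transpose hS, Matrix.mul_assoc,
    Matrix.transpose_transpose]

/-- `M(x) = Ĉ_{d11} + x (Ĉ_{d12} + Ĉ_{d21}) + x² Ĉ_{d22}`. -/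
def Mx {p t : ℕ} (n : ℕ) (S : Matrix (Fin p) (Fin p) ℝ) (w : TrtSeq p t → ℝ) (x : ℝ) :
    Matrix (Fin t) (Fin t) ℝ :=
  ChatD n S w 0 0 + x • (ChatD n S w 0 1 + ChatD n S w 1 0) + (x ^ 2) • ChatD n S w 1 1

lemma CD_comb {p t : ℕ} (n : ℕ) (S : Matrix (Fin p) (Fin p) ℝ) (w : TrtSeq p t → ℝ) (x : ℝ) :
    ∃ N : Matrix (Fin p) (Fin t) ℝ,
    CD n S w 0 0 + x • (CD n S w 0 1 + CD n S w 1 0) + (x ^ 2) • CD n S w 1 1 =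
      Mx n S w x - (n : ℝ) • (Nᵀ * Btil S * N) := by
  refine ⟨(∑ s : TrtSeq p t, w s • (Gmat 0 s * Bmat t)) +
    x • (∑ s : TrtSeq p t, w s • (Gmat 1 s * Bmat t)), ?_⟩
  unfold CD Mx
  generalize (∑ s : TrtSeq p t, w s • (Gmat 0 s * Bmat t)) = N0
  generalize (∑ s : TrtSeq p t, w s • (Gmat 1 s * Bmat t)) = N1
  simp only [Matrix.transpose_add, Matrix.transpose_smul, Matrix.add_mul, Matrix.mul_add,
    Matrix.smul_mul, Matrix.mul_smul]
  module

lemma Mx_row_sum {p t : ℕ} (ht : t ≠ 0) (n : ℕ) (S : Matrix (Fin p) (Fin p) ℝ)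
    (w : TrtSeq p t → ℝ) (x : ℝ) (a : Fin t) : ∑ b, Mx n S w x a b = 0 := by
  have h : ∀ i j, ∑ b, ChatD n S w i j a b = 0 := by
    intro i j
    simp only [ChatD, Matrix.sum_apply, Matrix.smul_apply, smul_eq_mul]
    rw [← Finset.mul_sum, Finset.sum_comm]
    simp [← Finset.mul_sum, Chat_row_sum ht]
  simp [Mx, Finset.sum_add_distrib, ← Finset.mul_sum, h]

lemma Mx_trace {p t : ℕ} (n : ℕ) {S : Matrix (Fin p) (Fin p) ℝ} (hS : S.PosDef)
    (w : TrtSeq p t → ℝ) (x : ℝ) : (Mx n S w x).trace = n * qD S w x := by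
  have h : ∀ i j, (ChatD n S w i j).trace = n * ∑ s, w s * cseq S s i j := cD_eq n S w
  simp only [Mx, Matrix.trace_add, Matrix.trace_smul, h, qD, qSeq, smul_eq_mul]
  simp only [cseq_symm hS _ 1 0, Finset.mul_sum, ← Finset.sum_add_distrib]
  refine Finset.sum_congr rfl fun s _ => ?_
  ring

lemma mD_le {p t : ℕ} (n : ℕ) (S : Matrix (Fin p) (Fin p) ℝ) (w : TrtSeq p t → ℝ) (l0 : ℝ)
    (τ l : Fin t → ℝ) (h0 : ∑ i, l i = 0) (h1 : l ⬝ᵥ l = 1) :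
    mD n S w l0 τ ≤ l ⬝ᵥ (CInfo n S w τ l0 *ᵥ l) := by
  apply csInf_le
  · let K : Set (Fin t → ℝ) := {l | ∑ i, l i = 0 ∧ l ⬝ᵥ l = 1}
    have hK : IsCompact K := by
      have hc : IsClosed K := by
        apply IsClosed.inter
        · exact isClosed_eq (by fun_prop) (by fun_prop)
        · refine isClosed_eq ?_ (by fun_prop)
          unfold dotProduct
          fun_prop
      refine IsCompact.of_isClosed_subset (isCompact_univ_pi (fun _ : Fin t =>
        (isCompact_Icc : IsCompact (Set.Icc (-1 : ℝ) 1)))) hc ?_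
      rintro l ⟨-, hl⟩ i -
      have : l i * l i ≤ l ⬝ᵥ l :=
        Finset.single_le_sum (f := fun i => l i * l i) (fun j _ => mul_self_nonneg _)
          (Finset.mem_univ i)
      constructor <;> nlinarith
    have hcont : Continuous fun l : Fin t → ℝ => l ⬝ᵥ (CInfo n S w τ l0 *ᵥ l) := by
      unfold dotProduct Matrix.mulVec dotProduct
      fun_prop
    refine (hK.bddBelow_image hcont.continuousOn).mono ?_
    rintro v ⟨l, a, b, rfl⟩
    exact ⟨l, ⟨a, b⟩, rfl⟩
  · exact ⟨l, h0, h1, rfl⟩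

lemma dot_self_pos {t : ℕ} {τ : Fin t → ℝ} (h : τ ≠ 0) : 0 < τ ⬝ᵥ τ := by
  have := Matrix.dotProduct_star_self_pos_iff.2 h
  simpa using this

lemma unit_scale {t : ℕ} {τ : Fin t → ℝ} (h : τ ≠ 0) (hs : ∑ i, τ i = 0) :
    ∃ r : ℝ, r ^ 2 = (τ ⬝ᵥ τ)⁻¹ ∧ ∑ i, (r • τ) i = 0 ∧ (r • τ) ⬝ᵥ (r • τ) = 1 := by
  have hp := dot_self_pos h
  refine ⟨Real.sqrt (τ ⬝ᵥ τ)⁻¹, Real.sq_sqrt (inv_nonneg.2 hp.le), ?_, ?_⟩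
  · simp [← Finset.mul_sum, hs]
  · rw [smul_dotProduct, dotProduct_smul, smul_eq_mul, smul_eq_mul, ← mul_assoc, ← pow_two,
      Real.sq_sqrt (inv_nonneg.2 hp.le), inv_mul_cancel₀ hp.ne']

lemma mD_upper {p t : ℕ} (hp : 2 ≤ p) (n : ℕ) {S : Matrix (Fin p) (Fin p) ℝ} (hS : S.PosDef)
    (w : TrtSeq p t → ℝ) (l0 : ℝ) (τ : Fin t → ℝ) (h : τ ≠ 0) (hs : ∑ i, τ i = 0)
    (hD : 0 < τ ⬝ᵥ (CD n S w 1 1 *ᵥ τ)) (x : ℝ) :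
    mD n S w l0 τ ≤ (τ ⬝ᵥ τ)⁻¹ * (τ ⬝ᵥ (Mx n S w x *ᵥ τ)) := by
  obtain ⟨r, hr, h0, h1⟩ := unit_scale h hs
  refine (mD_le n S w l0 τ _ h0 h1).trans ?_
  rw [Matrix.mulVec_smul, smul_dotProduct, dotProduct_smul, smul_eq_mul, smul_eq_mul,
    ← mul_assoc, ← pow_two, hr]
  refine mul_le_mul_of_nonneg_left ?_ (inv_nonneg.2 (dot_self_pos h).le)
  obtain ⟨N, hN⟩ := CD_comb n S w x
  have hMx : Mx n S w x = CD n S w 0 0 + x • (CD n S w 0 1 + CD n S w 1 0) +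
      (x ^ 2) • CD n S w 1 1 + (n : ℝ) • (Nᵀ * Btil S * N) := by
    rw [hN]; abel
  have hnn : 0 ≤ τ ⬝ᵥ ((Nᵀ * Btil S * N) *ᵥ τ) := by
    rw [← Matrix.mulVec_mulVec, ← Matrix.mulVec_mulVec, Matrix.dotProduct_mulVec,
      Matrix.vecMul_transpose]
    exact Btil_nonneg hp hS _
  have hsw : τ ⬝ᵥ (CD n S w 1 0 *ᵥ τ) = τ ⬝ᵥ (CD n S w 0 1 *ᵥ τ) := by
    rw [← CD_transpose n hS w 0 1, Matrix.mulVec_transpose, dotProduct_comm,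
      ← Matrix.dotProduct_mulVec]
  rw [hMx, CInfo]
  simp only [Matrix.add_mulVec, Matrix.sub_mulVec, Matrix.smul_mulVec, dotProduct_add,
    dotProduct_sub, dotProduct_smul, smul_eq_mul, quad_rank_one, hsw]
  generalize τ ⬝ᵥ (CD n S w 0 0 *ᵥ τ) = A
  generalize τ ⬝ᵥ (CD n S w 0 1 *ᵥ τ) = B
  generalize τ ⬝ᵥ (CD n S w 1 1 *ᵥ τ) = D at hD ⊢
  have hn0 : (0 : ℝ) ≤ n := Nat.cast_nonneg n
  have h2 := mul_nonneg hn0 hnn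
  have h3 : 0 ≤ D⁻¹ * (B + x * D) ^ 2 := mul_nonneg (inv_nonneg.2 hD.le) (sq_nonneg _)
  have h4 : D⁻¹ * (B + x * D) ^ 2 = D⁻¹ * ((B + l0 * D) * (B + l0 * D))
      + 2 * (x - l0) * B + (x ^ 2 - l0 ^ 2) * D := by
    field_simp
    ring
  nlinarith

lemma prior_moment {t : ℕ} (ht : 3 ≤ t) (g : Measure (Fin t → ℝ)) (hg : IsExchangeablePrior g) :
    (∀ i j, Integrable (fun τ : Fin t → ℝ => (τ ⬝ᵥ τ)⁻¹ * (τ i * τ j)) g) ∧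
    (Matrix.of fun i j => ∫ τ : Fin t → ℝ, (τ ⬝ᵥ τ)⁻¹ * (τ i * τ j) ∂g) =
      ((t : ℝ) - 1)⁻¹ • Bmat t := by
  obtain ⟨hprob, hnull, hperm⟩ := hg
  have hae : ∀ᵐ τ ∂g, (∑ i, τ i) = 0 ∧ τ ≠ 0 := by
    rw [ae_iff]; exact hnull
  have hmeas : ∀ i j, Measurable (fun τ : Fin t → ℝ => (τ ⬝ᵥ τ)⁻¹ * (τ i * τ j)) := by
    intro i j
    unfold dotProduct
    fun_prop
  have hint : ∀ i j, Integrable (fun τ : Fin t → ℝ => (τ ⬝ᵥ τ)⁻¹ * (τ i * τ j)) g := by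
    intro i j
    refine Integrable.of_bound (hmeas i j).aestronglyMeasurable 1 ?_
    filter_upwards [hae] with τ hτ
    have hpos := dot_self_pos hτ.2
    have hle : ∀ i, τ i ^ 2 ≤ τ ⬝ᵥ τ := by
      intro i
      rw [pow_two]
      exact Finset.single_le_sum (f := fun i => τ i * τ i) (fun j _ => mul_self_nonneg _)
          (Finset.mem_univ i)
    rw [Real.norm_eq_abs, abs_mul, abs_of_pos (inv_pos.2 hpos), inv_mul_le_iff₀ hpos, mul_one,
      abs_le]
    constructor
    · nlinarith [hle i, hle j, sq_nonneg (τ i + τ j)]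
    · nlinarith [hle i, hle j, sq_nonneg (τ i - τ j)]
  refine ⟨hint, ?_⟩
  set E : Matrix (Fin t) (Fin t) ℝ :=
    Matrix.of fun i j => ∫ τ : Fin t → ℝ, (τ ⬝ᵥ τ)⁻¹ * (τ i * τ j) ∂g with hE
  have hEinv : ∀ (σ : Equiv.Perm (Fin t)) a b, E (σ a) (σ b) = E a b := by
    intro σ a b
    simp only [hE, Matrix.of_apply]
    conv_rhs => rw [← hperm σ]
    rw [integral_map (measurable_pi_lambda _ fun i => measurable_pi_apply (σ i)).aemeasurable (hmeas a b).aestronglyMeasurable]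
    refine integral_congr_ae (Filter.Eventually.of_forall fun τ => ?_)
    have : (fun i => τ (σ i)) ⬝ᵥ (fun i => τ (σ i)) = τ ⬝ᵥ τ :=
      Equiv.sum_comp σ (fun i => τ i * τ i)
    simp only [this]
  have hErow : ∀ a, ∑ b, E a b = 0 := by
    intro a
    simp only [hE, Matrix.of_apply]
    rw [← integral_finsetSum _ (fun b _ => hint a b)]
    rw [integral_eq_zero_of_ae]
    filter_upwards [hae] with τ hτ
    simp [← Finset.mul_sum, hτ.1]
  have hEtr : E.trace = 1 := by
    show ∑ a, E a a = 1
    simp only [hE, Matrix.of_apply]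
    rw [← integral_finsetSum _ (fun b _ => hint b b)]
    rw [integral_congr_ae (g := fun _ => (1 : ℝ))]
    · simp
    · filter_upwards [hae] with τ hτ
      rw [← Finset.mul_sum]
      exact inv_mul_cancel₀ (dot_self_pos hτ.2).ne'
  have := symm_entries ht E hEinv hErow
  rw [this, hEtr, one_div]

lemma prior_quad {t : ℕ} (ht : 3 ≤ t) (g : Measure (Fin t → ℝ)) (hg : IsExchangeablePrior g)
    (M : Matrix (Fin t) (Fin t) ℝ) (hM : ∀ a, ∑ b, M a b = 0) :
    Integrable (fun τ : Fin t → ℝ => (τ ⬝ᵥ τ)⁻¹ * (τ ⬝ᵥ (M *ᵥ τ))) g ∧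
    ∫ τ : Fin t → ℝ, (τ ⬝ᵥ τ)⁻¹ * (τ ⬝ᵥ (M *ᵥ τ)) ∂g = M.trace / ((t : ℝ) - 1) := by
  obtain ⟨hint, hE⟩ := prior_moment ht g hg
  have hexp : (fun τ : Fin t → ℝ => (τ ⬝ᵥ τ)⁻¹ * (τ ⬝ᵥ (M *ᵥ τ))) =
      fun τ => ∑ i, ∑ j, M i j * ((τ ⬝ᵥ τ)⁻¹ * (τ i * τ j)) := by
    funext τ
    conv_lhs => rw [dotProduct.eq_def τ (M *ᵥ τ)]
    simp only [Matrix.mulVec, dotProduct.eq_def (M _), Finset.mul_sum]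
    refine Finset.sum_congr rfl fun i _ => Finset.sum_congr rfl fun j _ => ?_
    ring
  have hi : ∀ i, Integrable (fun τ : Fin t → ℝ =>
      ∑ j, M i j * ((τ ⬝ᵥ τ)⁻¹ * (τ i * τ j))) g :=
    fun i => integrable_finsetSum _ fun j _ => (hint i j).const_mul _
  rw [hexp]
  refine ⟨integrable_finsetSum _ fun i _ => hi i, ?_⟩
  rw [integral_finsetSum _ fun i _ => hi i]
  have hval : ∀ i, ∫ τ : Fin t → ℝ, ∑ j, M i j * ((τ ⬝ᵥ τ)⁻¹ * (τ i * τ j)) ∂g =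
      ((t : ℝ) - 1)⁻¹ * M i i := by
    intro i
    rw [integral_finsetSum _ fun j _ => (hint i j).const_mul _]
    have : ∀ j, ∫ τ : Fin t → ℝ, M i j * ((τ ⬝ᵥ τ)⁻¹ * (τ i * τ j)) ∂g =
        M i j * (((t : ℝ) - 1)⁻¹ * Bmat t i j) := by
      intro j
      rw [integral_const_mul]
      have := congrFun (congrFun hE i) j
      simp only [Matrix.of_apply, Matrix.smul_apply, smul_eq_mul] at this
      rw [this]
    simp only [this]
    have h2 : ∑ j, M i j * Bmat t i j = M i i := by
      simp [Bmat, Jmat, Matrix.one_apply, mul_sub, Finset.sum_sub_distrib, ← Finset.sum_mul, hM]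
    calc _ = ((t : ℝ) - 1)⁻¹ * ∑ j, M i j * Bmat t i j := by
          rw [Finset.mul_sum]
          refine Finset.sum_congr rfl fun j _ => by ring
      _ = _ := by rw [h2]
  simp only [hval]
  rw [← Finset.mul_sum, mul_comm, ← div_eq_mul_inv]
  rfl

lemma qSeq_le_qMax {p t : ℕ} (S : Matrix (Fin p) (Fin p) ℝ) (s : TrtSeq p t) (x : ℝ) :
    qSeq S s x ≤ qMax p t S x :=
  le_csSup (Set.finite_range _).bddAbove ⟨s, rfl⟩

lemma qD_le_qMax {p t : ℕ} (S : Matrix (Fin p) (Fin p) ℝ) (w : TrtSeq p t → ℝ)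
    (hw : IsDesign w) (x : ℝ) : qD S w x ≤ qMax p t S x := by
  calc qD S w x ≤ ∑ s : TrtSeq p t, w s * qMax p t S x :=
        Finset.sum_le_sum fun s _ => mul_le_mul_of_nonneg_left (qSeq_le_qMax S s x) (hw.1 s)
    _ = qMax p t S x := by rw [← Finset.sum_mul, hw.2, one_mul]

lemma Ecrit_le {p t : ℕ} (hp : 2 ≤ p) (ht : 3 ≤ t) (n : ℕ)
    {S : Matrix (Fin p) (Fin p) ℝ} (hS : S.PosDef)
    (l0 : ℝ) (g : Measure (Fin t → ℝ)) (hg : IsExchangeablePrior g)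
    (w : TrtSeq p t → ℝ) (hadm : EAdmissible n S g l0 w) :
    Ecrit n S g l0 w ≤ (n : ℝ) * yStar p t S / ((t : ℝ) - 1) := by
  have ht' : (3 : ℝ) ≤ t := by exact_mod_cast ht
  have hn0 : (0 : ℝ) ≤ n := Nat.cast_nonneg n
  have hx : ∀ x, Ecrit n S g l0 w ≤ (n : ℝ) * qMax p t S x / ((t : ℝ) - 1) := by
    intro x
    obtain ⟨hi, hv⟩ := prior_quad ht g hg (Mx n S w x) (Mx_row_sum (by omega) n S w x)
    have hae : ∀ᵐ τ ∂g, (∑ i, τ i) = 0 ∧ τ ≠ 0 := by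
      rw [ae_iff]; exact hg.2.1
    calc Ecrit n S g l0 w ≤ _ := by
          refine integral_mono_ae hadm.2.2 hi ?_
          filter_upwards [hae, hadm.2.1] with τ hτ hD
          exact mD_upper hp n hS w l0 τ hτ.2 hτ.1 hD x
      _ = (n : ℝ) * qD S w x / ((t : ℝ) - 1) := by rw [hv, Mx_trace n hS]
      _ ≤ _ := by
          refine div_le_div_of_nonneg_right ?_ (by linarith)
          exact mul_le_mul_of_nonneg_left (qD_le_qMax S w hadm.1 x) hn0
  unfold yStar
  rw [Real.mul_iInf_of_nonneg hn0, le_div_iff₀ (by linarith)]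
  refine le_ciInf fun x => ?_
  have := hx x
  rwa [le_div_iff₀ (by linarith)] at this

/-- There is a symmetric design attaining the bound in the game. -/
lemma exists_symm_design {p t : ℕ} (hp : 2 ≤ p) (ht : 3 ≤ t)
    {S : Matrix (Fin p) (Fin p) ℝ} (hS : S.PosDef) :
    ∃ w : TrtSeq p t → ℝ, IsDesign w ∧ IsSymmetricDesign w ∧ ∀ x, yStar p t S ≤ qD S w x := by
  have : Nonempty (TrtSeq p t) := ⟨fun _ => ⟨0, by omega⟩⟩
  obtain ⟨w, x0, hw0, hw1, hw⟩ := minimax_quad (fun s : TrtSeq p t => cseq S s 0 0)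
    (fun s => cseq S s 0 1) (fun s => cseq S s 1 1) (cseq_pos hp ht hS)
  have hy : ∀ x, yStar p t S ≤ qD S w x := by
    intro x
    have h1 : ∀ x', qMax p t S x0 ≤ qD S w x' := by
      intro x'
      apply csSup_le (Set.range_nonempty _)
      rintro _ ⟨s, rfl⟩
      exact hw x' s
    refine le_trans (ciInf_le ⟨qMax p t S x0, ?_⟩ x0) (h1 x)
    rintro _ ⟨x', rfl⟩
    exact (h1 x').trans (qD_le_qMax S w ⟨hw0, hw1⟩ x')
  have hf : (0 : ℝ) < (Nat.factorial t : ℝ) := by exact_mod_cast Nat.factorial_pos t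
  have hsum : ∀ F : TrtSeq p t → ℝ, (∀ (σ : Equiv.Perm (Fin t)) s, F (permSeq σ s) = F s) →
      ∑ s, ((Nat.factorial t : ℝ)⁻¹ * ∑ σ : Equiv.Perm (Fin t), w (permSeq σ s)) * F s =
        ∑ s, w s * F s := by
    intro F hF
    simp only [mul_assoc, Finset.sum_mul]
    rw [← Finset.mul_sum, Finset.sum_comm]
    have : ∀ σ : Equiv.Perm (Fin t), ∑ s, w (permSeq σ s) * F s = ∑ s, w s * F s := by
      intro σ
      rw [← Equiv.sum_comp (permSeqEquiv σ) (fun s => w s * F s)]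
      refine Finset.sum_congr rfl fun s _ => ?_
      rw [permSeqEquiv_apply, hF]
    simp only [this]
    rw [Finset.sum_const, Finset.card_univ, Fintype.card_perm, Fintype.card_fin, nsmul_eq_mul,
      ← mul_assoc, inv_mul_cancel₀ hf.ne', one_mul]
  refine ⟨fun s => (Nat.factorial t : ℝ)⁻¹ * ∑ σ : Equiv.Perm (Fin t), w (permSeq σ s),
    ⟨?_, ?_⟩, ?_, ?_⟩
  · intro s
    exact mul_nonneg (inv_nonneg.2 hf.le) (Finset.sum_nonneg fun σ _ => hw0 _)
  · have := hsum (fun _ => 1) (fun _ _ => rfl)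
    simpa [hw1] using this
  · intro σ s
    show _ * _ = _ * _
    congr 1
    exact Equiv.sum_comp (Equiv.mulRight σ) (fun ρ : Equiv.Perm (Fin t) => w (permSeq ρ s))
  · intro x
    have := hsum (fun s => qSeq S s x) (fun σ s => by simp only [qSeq, cseq_perm])
    exact (hy x).trans this.ge

set_option maxHeartbeats 2000000 in
lemma mD_symm {p t : ℕ} (ht : 3 ≤ t) (n : ℕ) {S : Matrix (Fin p) (Fin p) ℝ} (hS : S.PosDef)
    (w : TrtSeq p t → ℝ) (hw : IsSymmetricDesign w) (hc : 0 < cD n S w 1 1)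
    (l0 : ℝ) (τ : Fin t → ℝ) (h : τ ≠ 0) (hs : ∑ i, τ i = 0) :
    0 < τ ⬝ᵥ (CD n S w 1 1 *ᵥ τ) ∧
    mD n S w l0 τ = (cD n S w 0 0 - cD n S w 0 1 ^ 2 / cD n S w 1 1) / ((t : ℝ) - 1) := by
  have ht' : (3 : ℝ) ≤ t := by exact_mod_cast ht
  have htp : (0 : ℝ) < (t : ℝ) - 1 := by linarith
  have hpos := dot_self_pos h
  have hcs : cD n S w 1 0 = cD n S w 0 1 := by
    simp only [cD_eq, cseq_symm hS _ 1 0]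
  have hq : ∀ i j (u v : Fin t → ℝ), ∑ i, v i = 0 →
      u ⬝ᵥ (CD n S w i j *ᵥ v) = cD n S w i j / ((t : ℝ) - 1) * (u ⬝ᵥ v) := by
    intro i j u v hv
    rw [CD_of_symm ht n S w hw, Matrix.smul_mulVec, Bmat_mulVec v hv, dotProduct_smul, smul_eq_mul]
  have hform : ∀ l : Fin t → ℝ, ∑ i, l i = 0 → l ⬝ᵥ l = 1 →
      l ⬝ᵥ (CInfo n S w τ l0 *ᵥ l) =
      (cD n S w 0 0 + 2 * l0 * cD n S w 0 1 + l0 ^ 2 * cD n S w 1 1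
        - (cD n S w 0 1 + l0 * cD n S w 1 1) ^ 2 / cD n S w 1 1 *
          ((l ⬝ᵥ τ) ^ 2 / (τ ⬝ᵥ τ))) / ((t : ℝ) - 1) := by
    intro l hl hl1
    rw [CInfo]
    simp only [Matrix.add_mulVec, Matrix.sub_mulVec, Matrix.smul_mulVec, dotProduct_add,
      dotProduct_sub, dotProduct_smul, smul_eq_mul, quad_rank_one, hq _ _ _ l hl,
      hq _ _ _ τ hs, hcs, hl1, dotProduct_comm τ l]
    generalize cD n S w 1 1 = c at hc
    generalize τ ⬝ᵥ τ = r at hpos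
    field_simp
    ring
  refine ⟨by rw [hq _ _ _ τ hs]; positivity, ?_⟩
  obtain ⟨r, hr, h0, h1⟩ := unit_scale h hs
  unfold mD
  apply IsLeast.csInf_eq
  constructor
  · refine ⟨_, h0, h1, ?_⟩
    rw [hform _ h0 h1, smul_dotProduct, smul_eq_mul, mul_pow, hr]
    generalize cD n S w 1 1 = c at hc
    generalize τ ⬝ᵥ τ = r at hpos
    field_simp
    ring
  · rintro v ⟨l, hl, hl1, rfl⟩
    rw [hform l hl hl1]
    refine div_le_div_of_nonneg_right ?_ htp.le
    have hcs2 : (l ⬝ᵥ τ) ^ 2 / (τ ⬝ᵥ τ) ≤ 1 := by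
      rw [div_le_one hpos]
      have := Finset.sum_mul_sq_le_sq_mul_sq Finset.univ l τ
      simp only [pow_two] at this
      have h2 : (l ⬝ᵥ τ) * (l ⬝ᵥ τ) ≤ (l ⬝ᵥ l) * (τ ⬝ᵥ τ) := this
      rw [hl1] at h2
      nlinarith
    have h3 : 0 ≤ (cD n S w 0 1 + l0 * cD n S w 1 1) ^ 2 / cD n S w 1 1 := by positivity
    have h4 := mul_le_mul_of_nonneg_left hcs2 h3
    have h5 : (cD n S w 0 1 + l0 * cD n S w 1 1) ^ 2 / cD n S w 1 1 =
        cD n S w 0 1 ^ 2 / cD n S w 1 1 + 2 * l0 * cD n S w 0 1 + l0 ^ 2 * cD n S w 1 1 := by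
      field_simp
      ring
    linarith

lemma exists_attaining {p t n : ℕ} (hp : 2 ≤ p) (ht : 3 ≤ t) (hn : 1 ≤ n)
    {S : Matrix (Fin p) (Fin p) ℝ} (hS : S.PosDef)
    (l0 : ℝ) (g : Measure (Fin t → ℝ)) (hg : IsExchangeablePrior g) :
    ∃ w : TrtSeq p t → ℝ, EAdmissible n S g l0 w ∧
      (n : ℝ) * yStar p t S / ((t : ℝ) - 1) ≤ Ecrit n S g l0 w := by
  have ht' : (3 : ℝ) ≤ t := by exact_mod_cast ht
  have hn' : (1 : ℝ) ≤ n := by exact_mod_cast hn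
  obtain ⟨w, hd, hsym, hy⟩ := exists_symm_design hp ht hS
  have hsumpos : 0 < ∑ s, w s * cseq S s 1 1 := by
    have hex : ∃ s, 0 < w s := by
      by_contra! hcon
      have : ∑ s : TrtSeq p t, w s ≤ 0 := Finset.sum_nonpos fun s _ => hcon s
      rw [hd.2] at this
      linarith
    obtain ⟨s, hs⟩ := hex
    exact Finset.sum_pos' (fun s _ => mul_nonneg (hd.1 s) (cseq_pos hp ht hS s).le)
      ⟨s, Finset.mem_univ _, mul_pos hs (cseq_pos hp ht hS s)⟩
  have hc : 0 < cD n S w 1 1 := by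
    rw [cD_eq]; exact mul_pos (by linarith) hsumpos
  have hae : ∀ᵐ τ ∂g, (∑ i, τ i) = 0 ∧ τ ≠ 0 := by
    rw [ae_iff]; exact hg.2.1
  have := hg.1
  set k := (cD n S w 0 0 - cD n S w 0 1 ^ 2 / cD n S w 1 1) / ((t : ℝ) - 1) with hk
  have hm : mD n S w l0 =ᵐ[g] fun _ => k := by
    filter_upwards [hae] with τ hτ
    exact (mD_symm ht n hS w hsym hc l0 τ hτ.2 hτ.1).2
  refine ⟨w, ⟨hd, ?_, ?_⟩, ?_⟩
  · filter_upwards [hae] with τ hτ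
    exact (mD_symm ht n hS w hsym hc l0 τ hτ.2 hτ.1).1
  · exact (integrable_const k).congr hm.symm
  · rw [Ecrit, integral_congr_ae hm]
    simp only [integral_const, probReal_univ, one_smul, smul_eq_mul, one_mul]
    rw [hk]
    refine div_le_div_of_nonneg_right ?_ (by linarith)
    have h1 := hy (-(∑ s, w s * cseq S s 0 1) / ∑ s, w s * cseq S s 1 1)
    have hqd : ∀ x, qD S w x = (∑ s, w s * cseq S s 0 0) + 2 * (∑ s, w s * cseq S s 0 1) * x +
        (∑ s, w s * cseq S s 1 1) * x ^ 2 := by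
      intro x
      simp only [qD, qSeq, Finset.mul_sum, Finset.sum_mul, ← Finset.sum_add_distrib]
      refine Finset.sum_congr rfl fun s _ => ?_
      ring
    rw [hqd] at h1
    rw [cD_eq, cD_eq, cD_eq]
    refine (mul_le_mul_of_nonneg_left h1 (by linarith : (0 : ℝ) ≤ n)).trans (le_of_eq ?_)
    generalize ∑ s, w s * cseq S s 1 1 = c at hsumpos
    have : (n : ℝ) ≠ 0 := by linarith
    field_simp
    ring

/-- a design is `E_{g,λ0}`-optimal iff its E-criterion value equals
`n y*/(t-1)`. -/
theorem stmt6 (p t n : ℕ) (hp : 2 ≤ p) (ht : 3 ≤ t) (hn : 1 ≤ n)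
    (S : Matrix (Fin p) (Fin p) ℝ) (hS : S.PosDef)
    (l0 : ℝ) (g : Measure (Fin t → ℝ)) (hg : IsExchangeablePrior g)
    (w : TrtSeq p t → ℝ) (hadm : EAdmissible n S g l0 w) :
    EOptimal n S g l0 w ↔
      Ecrit n S g l0 w = (n : ℝ) * yStar p t S / ((t : ℝ) - 1) := by
  constructor
  · intro hopt
    obtain ⟨w0, hw0, hle⟩ := exists_attaining hp ht hn hS l0 g hg
    exact le_antisymm (Ecrit_le hp ht n hS l0 g hg w hadm) (hle.trans (hopt w0 hw0))
  · intro heq w1 hw1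
    rw [heq]
    exact Ecrit_le hp ht n hS l0 g hg w1 hw1
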